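/- Let M₀, B > 0. There exists a constant C > 0, depending only on M₀ and B, with the following property. Let u : ℝ² → ℂ be 2π-periodic and C¹ with |u|⁴ and ‖∇u‖² integrable on Q, and let n, v : ℝ² → ℝ be 2π-periodic with n², v² integrable on Q. Assume the Gagliardo–Nirenberg inequality ∫_Q |u|⁴ dx ≤ ( 2 M₀^{−1} ∫_Q ‖∇u‖² dx + B ∫_Q |u|² dx ) · ( ∫_Q |u|² dx ) and that ∫_Q |u|² dx = M₀. Then (1/2) ∫_Q (|u|² + n)² dx + (1/2) ∫_Q v² dx ≤ E(u,n,v) + M₀² B / 2 ≤ C ( ∫_Q |u|² + ∫_Q ‖∇u‖² + ∫_Q n² + ∫_Q v² ). -/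

import Mathlib

/-!
Completing the square in `½ n² + n |u|²` writes the energy as
`½ ∫ (|u|² + n)² + ½ ∫ v² + (∫ ‖∇u‖² - ½ ∫ |u|⁴)`. For mass `m ≤ M₀` the Gagliardo–Nirenberg
inequality gives `∫ |u|⁴ ≤ 2 ∫ ‖∇u‖² + B m²`, so a shift by `½ B m²` makes the last bracket
nonnegative. The same inequality absorbs the quartic term in the upper bound.
-/

open MeasureTheory Real Set

noncomputable section

abbrev R2 := EuclideanSpace ℝ (Fin 2)

def Q2 : Set R2 := {x | ∀ i, x i ∈ Icc (-π) π}

def Periodic2 {E : Type*} (f : R2 → E) : Prop :=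
  ∀ (x : R2) (k : Fin 2 → ℤ),
    f (x + (EuclideanSpace.equiv (Fin 2) ℝ).symm (fun i => 2 * π * (k i : ℝ))) = f x
/-- The Zakharov energy 𝓔(u,n,v). -/
noncomputable def zakharovEnergy (u : R2 → ℂ) (n v : R2 → ℝ) : ℝ :=
  (∫ x in Q2, ‖fderiv ℝ u x‖ ^ 2) + (1/2) * (∫ x in Q2, (n x) ^ 2)
    + (1/2) * (∫ x in Q2, (v x) ^ 2) + ∫ x in Q2, n x * ‖u x‖ ^ 2

section ZakharovEnergy

variable {X F G : Type*} [MeasurableSpace X] [NormedAddCommGroup F] [NormedAddCommGroup G]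
  {μ : Measure X} {u : X → F} {du : X → G} {n v : X → ℝ} {M₀ B : ℝ}

/-- The Zakharov energy over a measure space. The gradient is an argument `du` of its own, so that
weak gradients are covered as well as classical ones. -/
def zakharovEnergyOn (μ : Measure X) (u : X → F) (du : X → G) (n v : X → ℝ) : ℝ :=
  (∫ x, ‖du x‖ ^ 2 ∂μ) + (1 / 2) * (∫ x, n x ^ 2 ∂μ) + (1 / 2) * (∫ x, v x ^ 2 ∂μ)
    + ∫ x, n x * ‖u x‖ ^ 2 ∂μ

/-- States of finite Zakharov energy, for which every integral of `zakharovEnergyOn` converges. -/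
structure HasFiniteEnergy (μ : Measure X) (u : X → F) (du : X → G) (n v : X → ℝ) : Prop where
  memLp_field : MemLp u 4 μ
  memLp_gradient : MemLp du 2 μ
  memLp_density : MemLp n 2 μ
  memLp_velocity : MemLp v 2 μ

/-- The Gagliardo–Nirenberg inequality between the `L⁴` norm, the gradient and the mass of a single
state, with critical mass `M₀` and lower-order constant `B`. -/
def GagliardoNirenbergBound (M₀ B : ℝ) (μ : Measure X) (u : X → F) (du : X → G) : Prop :=
  ∫ x, ‖u x‖ ^ 4 ∂μ ≤ (2 * M₀⁻¹ * (∫ x, ‖du x‖ ^ 2 ∂μ) + B * ∫ x, ‖u x‖ ^ 2 ∂μ)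
    * ∫ x, ‖u x‖ ^ 2 ∂μ

lemma memLp_natCast_iff_integrable_norm_pow {p : ℕ} (hp : p ≠ 0) (hu : AEStronglyMeasurable u μ) :
    MemLp u p μ ↔ Integrable (fun x ↦ ‖u x‖ ^ p) μ := by
  simpa using (integrable_norm_rpow_iff (p := p) hu (by simpa using hp) (by simp)).symm

lemma memLp_two_norm_sq (hu : MemLp u 4 μ) : MemLp (fun x ↦ ‖u x‖ ^ 2) 2 μ := by
  refine (memLp_two_iff_integrable_sq (hu.aestronglyMeasurable.norm.pow 2)).2 ?_
  simpa only [Pi.pow_apply, ← pow_mul] using hu.integrable_norm_pow four_ne_zero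

lemma hasFiniteEnergy_of_contDiff {E F : Type*} [NormedAddCommGroup E] [NormedSpace ℝ E]
    [SecondCountableTopology E] [MeasurableSpace E] [OpensMeasurableSpace E]
    [NormedAddCommGroup F] [NormedSpace ℝ F] {μ : Measure E} {u : E → F} {n v : E → ℝ}
    (hu : ContDiff ℝ 1 u) (hn : AEStronglyMeasurable n μ) (hv : AEStronglyMeasurable v μ)
    (hu4 : Integrable (fun x ↦ ‖u x‖ ^ 4) μ) (hdu2 : Integrable (fun x ↦ ‖fderiv ℝ u x‖ ^ 2) μ)
    (hn2 : Integrable (fun x ↦ n x ^ 2) μ) (hv2 : Integrable (fun x ↦ v x ^ 2) μ) :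
    HasFiniteEnergy μ u (fderiv ℝ u) n v where
  memLp_field := (memLp_natCast_iff_integrable_norm_pow four_ne_zero
    hu.continuous.aestronglyMeasurable).2 hu4
  memLp_gradient := (memLp_two_iff_integrable_sq_norm
    (hu.continuous_fderiv one_ne_zero).aestronglyMeasurable).2 hdu2
  memLp_density := (memLp_two_iff_integrable_sq hn).2 hn2
  memLp_velocity := (memLp_two_iff_integrable_sq hv).2 hv2

lemma integral_add_sq {f g : X → ℝ} (hf : MemLp f 2 μ) (hg : MemLp g 2 μ) :
    ∫ x, (f x + g x) ^ 2 ∂μ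
      = (∫ x, f x ^ 2 ∂μ) + 2 * (∫ x, f x * g x ∂μ) + ∫ x, g x ^ 2 ∂μ := by
  have hfg : Integrable (fun x ↦ 2 * (f x * g x)) μ := (hf.integrable_mul hg).const_mul 2
  have hffg : Integrable (fun x ↦ f x ^ 2 + 2 * (f x * g x)) μ := hf.integrable_sq.add hfg
  simp only [add_sq, mul_assoc]
  rw [integral_add hffg hg.integrable_sq, integral_add hf.integrable_sq hfg, integral_const_mul]

lemma two_mul_integral_mul_le {f g : X → ℝ} (hf : MemLp f 2 μ) (hg : MemLp g 2 μ) :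
    2 * ∫ x, f x * g x ∂μ ≤ (∫ x, f x ^ 2 ∂μ) + ∫ x, g x ^ 2 ∂μ := by
  have hsq : 0 ≤ ∫ x, (f x + -g x) ^ 2 ∂μ := integral_nonneg fun x ↦ sq_nonneg _
  have hexpand := integral_add_sq hf hg.neg
  simp only [Pi.neg_apply, mul_neg, neg_sq, integral_neg] at hexpand
  linarith

lemma zakharovEnergyOn_eq_integral_sq (hu : MemLp u 4 μ) (hn : MemLp n 2 μ) :
    zakharovEnergyOn μ u du n v
      = (1 / 2) * (∫ x, (‖u x‖ ^ 2 + n x) ^ 2 ∂μ) + (1 / 2) * (∫ x, v x ^ 2 ∂μ)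
        + ((∫ x, ‖du x‖ ^ 2 ∂μ) - (1 / 2) * ∫ x, ‖u x‖ ^ 4 ∂μ) := by
  have hexpand := integral_add_sq (memLp_two_norm_sq hu) hn
  simp only [← pow_mul, Nat.reduceMul, mul_comm (‖u _‖ ^ 2)] at hexpand
  rw [zakharovEnergyOn, hexpand]
  ring

lemma zakharovEnergyOn_le (hu : MemLp u 4 μ) (hn : MemLp n 2 μ) :
    zakharovEnergyOn μ u du n v
      ≤ (∫ x, ‖du x‖ ^ 2 ∂μ) + (∫ x, n x ^ 2 ∂μ) + (1 / 2) * (∫ x, v x ^ 2 ∂μ)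
        + (1 / 2) * ∫ x, ‖u x‖ ^ 4 ∂μ := by
  have hcross := two_mul_integral_mul_le hn (memLp_two_norm_sq hu)
  simp only [← pow_mul, Nat.reduceMul] at hcross
  rw [zakharovEnergyOn]
  linarith

lemma integral_norm_pow_four_le_of_mass_le (hM : 0 < M₀)
    (hGN : GagliardoNirenbergBound M₀ B μ u du)
    (hmass : ∫ x, ‖u x‖ ^ 2 ∂μ ≤ M₀) :
    ∫ x, ‖u x‖ ^ 4 ∂μ ≤ 2 * (∫ x, ‖du x‖ ^ 2 ∂μ) + B * (∫ x, ‖u x‖ ^ 2 ∂μ) ^ 2 := by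
  set m := ∫ x, ‖u x‖ ^ 2 ∂μ
  set D := ∫ x, ‖du x‖ ^ 2 ∂μ
  have hD : 0 ≤ D := integral_nonneg fun x ↦ sq_nonneg _
  calc ∫ x, ‖u x‖ ^ 4 ∂μ
      ≤ (2 * M₀⁻¹ * D + B * m) * m := hGN
    _ = 2 * D * (M₀⁻¹ * m) + B * m ^ 2 := by ring
    _ ≤ 2 * D + B * m ^ 2 := by
        have hratio : M₀⁻¹ * m ≤ 1 := (inv_mul_le_one₀ hM).2 hmass
        exact add_le_add_left (mul_le_of_le_one_right (by linarith) hratio) _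

lemma integral_sq_le_shifted_zakharovEnergyOn (hM : 0 < M₀) (hu : MemLp u 4 μ) (hn : MemLp n 2 μ)
    (hGN : GagliardoNirenbergBound M₀ B μ u du)
    (hmass : ∫ x, ‖u x‖ ^ 2 ∂μ ≤ M₀) :
    (1 / 2) * (∫ x, (‖u x‖ ^ 2 + n x) ^ 2 ∂μ) + (1 / 2) * (∫ x, v x ^ 2 ∂μ)
      ≤ zakharovEnergyOn μ u du n v + (∫ x, ‖u x‖ ^ 2 ∂μ) ^ 2 * B / 2 := by
  have hquartic := integral_norm_pow_four_le_of_mass_le hM hGN hmass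
  rw [zakharovEnergyOn_eq_integral_sq hu hn]
  linarith

lemma shifted_zakharovEnergyOn_le (hM : 0 < M₀) (hu : MemLp u 4 μ) (hn : MemLp n 2 μ)
    (hGN : GagliardoNirenbergBound M₀ B μ u du)
    (hmass : ∫ x, ‖u x‖ ^ 2 ∂μ ≤ M₀) :
    zakharovEnergyOn μ u du n v + (∫ x, ‖u x‖ ^ 2 ∂μ) ^ 2 * B / 2
      ≤ max 2 (M₀ * B) * ((∫ x, ‖u x‖ ^ 2 ∂μ) + (∫ x, ‖du x‖ ^ 2 ∂μ) + (∫ x, n x ^ 2 ∂μ)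
        + ∫ x, v x ^ 2 ∂μ) := by
  have henergy := zakharovEnergyOn_le (du := du) (v := v) hu hn
  have hquartic := integral_norm_pow_four_le_of_mass_le hM hGN hmass
  set m := ∫ x, ‖u x‖ ^ 2 ∂μ
  set D := ∫ x, ‖du x‖ ^ 2 ∂μ
  set N := ∫ x, n x ^ 2 ∂μ
  set V := ∫ x, v x ^ 2 ∂μ
  have hm : 0 ≤ m := integral_nonneg fun x ↦ sq_nonneg _
  have hD : 0 ≤ D := integral_nonneg fun x ↦ sq_nonneg _
  have hN : 0 ≤ N := integral_nonneg fun x ↦ sq_nonneg _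
  have hV : 0 ≤ V := integral_nonneg fun x ↦ sq_nonneg _
  have hBm : B * m ≤ max 2 (M₀ * B) := by
    rcases le_total 0 B with hB | hB
    · refine le_max_of_le_right ?_
      rw [mul_comm M₀]
      exact mul_le_mul_of_nonneg_left hmass hB
    · exact le_max_of_le_left ((mul_nonpos_of_nonpos_of_nonneg hB hm).trans zero_le_two)
  calc zakharovEnergyOn μ u du n v + m ^ 2 * B / 2
      ≤ B * m * m + 2 * (D + N + V) := by linarith
    _ ≤ max 2 (M₀ * B) * m + max 2 (M₀ * B) * (D + N + V) :=
        add_le_add (mul_le_mul_of_nonneg_right hBm hm)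
          (mul_le_mul_of_nonneg_right (le_max_left _ _) (add_nonneg (add_nonneg hD hN) hV))
    _ = max 2 (M₀ * B) * (m + D + N + V) := by ring

theorem stmt13_general (hM : 0 < M₀) (h : HasFiniteEnergy μ u du n v)
    (hGN : GagliardoNirenbergBound M₀ B μ u du)
    (hmass : ∫ x, ‖u x‖ ^ 2 ∂μ ≤ M₀) :
    (1 / 2) * (∫ x, (‖u x‖ ^ 2 + n x) ^ 2 ∂μ) + (1 / 2) * (∫ x, v x ^ 2 ∂μ)
        ≤ zakharovEnergyOn μ u du n v + (∫ x, ‖u x‖ ^ 2 ∂μ) ^ 2 * B / 2 ∧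
      zakharovEnergyOn μ u du n v + (∫ x, ‖u x‖ ^ 2 ∂μ) ^ 2 * B / 2
        ≤ max 2 (M₀ * B) * ((∫ x, ‖u x‖ ^ 2 ∂μ) + (∫ x, ‖du x‖ ^ 2 ∂μ) + (∫ x, n x ^ 2 ∂μ)
          + ∫ x, v x ^ 2 ∂μ) :=
  ⟨integral_sq_le_shifted_zakharovEnergyOn hM h.memLp_field h.memLp_density hGN hmass,
    shifted_zakharovEnergyOn_le hM h.memLp_field h.memLp_density hGN hmass⟩

end ZakharovEnergy

/-- Lemma 5.2(ii): at the critical mass the shifted energy controls ∫(|u|²+n)² + ‖v‖². -/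
theorem stmt13 (M₀ B : ℝ) (hM : 0 < M₀) (hB : 0 < B) :
    ∃ C > 0, ∀ (u : R2 → ℂ) (n v : R2 → ℝ),
      Periodic2 u → Periodic2 n → Periodic2 v →
      Measurable n → Measurable v →
      ContDiff ℝ 1 u →
      IntegrableOn (fun x => ‖u x‖ ^ 4) Q2 →
      IntegrableOn (fun x => ‖fderiv ℝ u x‖ ^ 2) Q2 →
      IntegrableOn (fun x => (n x) ^ 2) Q2 →
      IntegrableOn (fun x => (v x) ^ 2) Q2 →
      ((∫ x in Q2, ‖u x‖ ^ 4) ≤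
        (2 * M₀⁻¹ * (∫ x in Q2, ‖fderiv ℝ u x‖ ^ 2) + B * (∫ x in Q2, ‖u x‖ ^ 2)) *
          (∫ x in Q2, ‖u x‖ ^ 2)) →
      (∫ x in Q2, ‖u x‖ ^ 2) = M₀ →
      (1/2) * (∫ x in Q2, (‖u x‖ ^ 2 + n x) ^ 2) + (1/2) * (∫ x in Q2, (v x) ^ 2)
          ≤ zakharovEnergy u n v + M₀ ^ 2 * B / 2 ∧
        zakharovEnergy u n v + M₀ ^ 2 * B / 2
          ≤ C * ((∫ x in Q2, ‖u x‖ ^ 2) + (∫ x in Q2, ‖fderiv ℝ u x‖ ^ 2)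
            + (∫ x in Q2, (n x) ^ 2) + (∫ x in Q2, (v x) ^ 2)) := by
  refine ⟨max 2 (M₀ * B), by positivity, fun u n v _ _ _ hn hv hu hu4 hdu2 hn2 hv2 hGN hmass ↦ ?_⟩
  have hfinite := hasFiniteEnergy_of_contDiff hu hn.aestronglyMeasurable hv.aestronglyMeasurable
    hu4 hdu2 hn2 hv2
  have hbounds := stmt13_general hM hfinite hGN hmass.le
  rw [hmass] at hbounds ⊢
  exact hbounds
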